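/- The function R satisfies a ΔR − ∇a · ∇R = (n−2) a (∇a · ∇u) at every point of U; that is, a Σ_{i=1}^n ∂_{ii}R − Σ_{i=1}^n (∂_i a)(∂_i R) = (n−2) a Σ_{i=1}^n (∂_i a)(∂_i u). -/

import Mathlib

/-- Partial derivative in direction `i` of a function on `ℝⁿ`. -/
noncomputable def pd {n : ℕ} (i : Fin n) (f : EuclideanSpace ℝ (Fin n) → ℝ)
    (x : EuclideanSpace ℝ (Fin n)) : ℝ :=
  fderiv ℝ f x (EuclideanSpace.single i 1)

section helpers

variable {n : ℕ} {U : Set (EuclideanSpace ℝ (Fin n))}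

theorem pd_smooth (hU : IsOpen U) {f : EuclideanSpace ℝ (Fin n) → ℝ}
    (hf : ContDiffOn ℝ (⊤ : ℕ∞) f U) (i : Fin n) : ContDiffOn ℝ (⊤ : ℕ∞) (pd i f) U := by
  have h := hf.fderiv_of_isOpen hU (m := ((⊤ : ℕ∞) : WithTop ℕ∞)) (by simp)
  exact h.clm_apply contDiffOn_const

theorem smooth_diff (hU : IsOpen U) {f : EuclideanSpace ℝ (Fin n) → ℝ}
    (hf : ContDiffOn ℝ (⊤ : ℕ∞) f U) {x} (hx : x ∈ U) : DifferentiableAt ℝ f x :=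
  (hf.differentiableOn (by simp)).differentiableAt (hU.mem_nhds hx)

theorem pd_congr (hU : IsOpen U) {f g : EuclideanSpace ℝ (Fin n) → ℝ}
    (h : ∀ x ∈ U, f x = g x) (i : Fin n) : ∀ x ∈ U, pd i f x = pd i g x := by
  intro x hx
  have : f =ᶠ[nhds x] g := Filter.eventuallyEq_of_mem (hU.mem_nhds hx) h
  simp only [pd, this.fderiv_eq]

theorem pd_add {f g : EuclideanSpace ℝ (Fin n) → ℝ} {x} (hf : DifferentiableAt ℝ f x)
    (hg : DifferentiableAt ℝ g x) (i : Fin n) :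
    pd i (fun y => f y + g y) x = pd i f x + pd i g x := by
  simp only [pd, fderiv_fun_add hf hg, _root_.add_apply]

theorem pd_sub {f g : EuclideanSpace ℝ (Fin n) → ℝ} {x} (hf : DifferentiableAt ℝ f x)
    (hg : DifferentiableAt ℝ g x) (i : Fin n) :
    pd i (fun y => f y - g y) x = pd i f x - pd i g x := by
  simp only [pd, fderiv_fun_sub hf hg, _root_.sub_apply]

theorem pd_mul {f g : EuclideanSpace ℝ (Fin n) → ℝ} {x} (hf : DifferentiableAt ℝ f x)
    (hg : DifferentiableAt ℝ g x) (i : Fin n) :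
    pd i (fun y => f y * g y) x = pd i f x * g x + f x * pd i g x := by
  simp only [pd, fderiv_fun_mul hf hg, _root_.add_apply,
    _root_.smul_apply, smul_eq_mul]
  ring

theorem pd_sum {f : Fin n → EuclideanSpace ℝ (Fin n) → ℝ} {x}
    (hf : ∀ k, DifferentiableAt ℝ (f k) x) (i : Fin n) :
    pd i (fun y => ∑ k, f k y) x = ∑ k, pd i (f k) x := by
  simp only [pd, fderiv_fun_sum (fun k _ => hf k), _root_.sum_apply]

theorem coord_smooth (k : Fin n) :
    ContDiffOn ℝ (⊤ : ℕ∞) (fun y : EuclideanSpace ℝ (Fin n) => y k) U :=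
  (EuclideanSpace.proj (𝕜 := ℝ) k).contDiff.contDiffOn

theorem pd_coord (i k : Fin n) (x : EuclideanSpace ℝ (Fin n)) :
    pd i (fun y : EuclideanSpace ℝ (Fin n) => y k) x = if k = i then 1 else 0 := by
  have : fderiv ℝ (fun y : EuclideanSpace ℝ (Fin n) => y k) x = EuclideanSpace.proj (𝕜 := ℝ) k :=
    (EuclideanSpace.proj (𝕜 := ℝ) k).fderiv
  simp [pd, this]

theorem pd_const (i : Fin n) (c : ℝ) (x : EuclideanSpace ℝ (Fin n)) :
    pd i (fun _ => c) x = 0 := by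
  simp [pd]

theorem pd_comm (hU : IsOpen U) {f : EuclideanSpace ℝ (Fin n) → ℝ}
    (hf : ContDiffOn ℝ (⊤ : ℕ∞) f U) (i j : Fin n) :
    ∀ x ∈ U, pd i (pd j f) x = pd j (pd i f) x := by
  intro x hx
  have hc : ContDiffAt ℝ (⊤ : ℕ∞) f x := hf.contDiffAt (hU.mem_nhds hx)
  have hs : IsSymmSndFDerivAt ℝ f x := hc.isSymmSndFDerivAt (by
    rw [minSmoothness_of_isRCLikeNormedField]
    exact WithTop.coe_le_coe.2 (le_top : (2 : ℕ∞) ≤ ⊤))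
  have hd : DifferentiableAt ℝ (fderiv ℝ f) x :=
    ((hf.fderiv_of_isOpen hU (m := ((⊤ : ℕ∞) : WithTop ℕ∞)) (by simp)).differentiableOn
      (by simp)).differentiableAt (hU.mem_nhds hx)
  have key : ∀ i j : Fin n, pd i (pd j f) x =
      fderiv ℝ (fderiv ℝ f) x (EuclideanSpace.single i 1) (EuclideanSpace.single j 1) := by
    intro i j
    have : pd j f = fun y => fderiv ℝ f y (EuclideanSpace.single j 1) := rfl
    rw [this, pd, fderiv_clm_apply hd (differentiableAt_const _)]
    simp
  rw [key, key]
  exact hs _ _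

/-- First derivatives of `∑ x_k v_k`. -/
theorem pd_euler (hU : IsOpen U) {v : Fin n → EuclideanSpace ℝ (Fin n) → ℝ}
    (hv : ∀ k, ContDiffOn ℝ (⊤ : ℕ∞) (v k) U) (i : Fin n) :
    ∀ x ∈ U, pd i (fun y => ∑ k, y k * v k y) x = v i x + ∑ k, x k * pd i (v k) x := by
  intro x hx
  rw [pd_sum (f := fun k y => y k * v k y) (fun k => (smooth_diff hU (coord_smooth k) hx).mul (smooth_diff hU (hv k) hx))]
  have : ∀ k, pd i (fun y => y k * v k y) x = (if k = i then v k x else 0) + x k * pd i (v k) x := by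
    intro k
    rw [pd_mul (smooth_diff hU (coord_smooth k) hx) (smooth_diff hU (hv k) hx), pd_coord]
    simp
  simp [this, Finset.sum_add_distrib]

theorem euler_smooth {v : Fin n → EuclideanSpace ℝ (Fin n) → ℝ}
    (hv : ∀ k, ContDiffOn ℝ (⊤ : ℕ∞) (v k) U) :
    ContDiffOn ℝ (⊤ : ℕ∞) (fun y => ∑ k, y k * v k y) U :=
  ContDiffOn.sum (fun k _ => (coord_smooth k).mul (hv k))

end helpers

/-- Section 5: the quantity `R = a ∑ x_k ∂_k u` satisfies
`a ΔR − ∇a · ∇R = (n−2) a (∇a · ∇u)` on `U`, in any dimension `n ≥ 2`. -/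
theorem stmt10 (n : ℕ) (hn : 2 ≤ n)
    (U : Set (EuclideanSpace ℝ (Fin n))) (hU : IsOpen U)
    (a u : EuclideanSpace ℝ (Fin n) → ℝ)
    (ha : ContDiffOn ℝ (⊤ : ℕ∞) a U) (hapos : ∀ x ∈ U, 0 < a x)
    (hrad : ∀ (j k : Fin n), ∀ x ∈ U, x j * pd k a x - x k * pd j a x = 0)
    (hu : ContDiffOn ℝ (⊤ : ℕ∞) u U)
    (heq : ∀ x ∈ U, a x * (∑ i, pd i (pd i u) x) + ∑ i, pd i a x * pd i u x = 0)
    (R : EuclideanSpace ℝ (Fin n) → ℝ)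
    (hR : ∀ x, R x = a x * ∑ k, x k * pd k u x) :
    ∀ x ∈ U,
      a x * (∑ i, pd i (pd i R) x) - ∑ i, pd i a x * pd i R x
        = ((n : ℝ) - 2) * a x * ∑ i, pd i a x * pd i u x := by
  intro x hx
  have hu1 := pd_smooth hU hu
  have ha1 := pd_smooth hU ha
  have hu2 := fun i k => pd_smooth hU (hu1 k) i
  have hE := euler_smooth hu1
  set E : EuclideanSpace ℝ (Fin n) → ℝ := fun y => ∑ k, y k * pd k u y with hEdef
  have hE1 : ∀ i, ∀ y ∈ U, pd i E y = pd i u y + ∑ k, y k * pd i (pd k u) y :=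
    fun i => pd_euler hU hu1 i
  have hE2 : ∀ i, pd i (pd i E) x = 2 * pd i (pd i u) x + ∑ k, x k * pd k (pd i (pd i u)) x := by
    intro i
    rw [pd_congr hU (hE1 i) i x hx,
      pd_add (smooth_diff hU (hu1 i) hx) (smooth_diff hU (euler_smooth (hu2 i)) hx),
      pd_euler hU (hu2 i) i x hx]
    have : ∀ k, pd i (pd i (pd k u)) x = pd k (pd i (pd i u)) x := fun k => by
      rw [pd_congr hU (pd_comm hU hu i k) i x hx, pd_comm hU (hu1 i) i k x hx]
    simp only [this]
    ring
  have hRf : R = fun y => a y * E y := funext hR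
  have hR1 : ∀ i, ∀ y ∈ U, pd i R y = pd i a y * E y + a y * pd i E y := by
    intro i y hy
    rw [hRf, pd_mul (smooth_diff hU ha hy) (smooth_diff hU hE hy)]
  have hR2 : ∀ i, pd i (pd i R) x = pd i (pd i a) x * E x + 2 * (pd i a x * pd i E x)
      + a x * pd i (pd i E) x := by
    intro i
    have hEi := pd_smooth hU hE i
    rw [pd_congr hU (hR1 i) i x hx,
      pd_add (smooth_diff hU ((ha1 i).mul hE) hx) (smooth_diff hU (ha.mul hEi) hx),
      pd_mul (smooth_diff hU (ha1 i) hx) (smooth_diff hU hE hx),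
      pd_mul (smooth_diff hU ha hx) (smooth_diff hU hEi hx)]
    ring
  -- derivative of the equation
  have hD : ∀ k, pd k a x * (∑ i, pd i (pd i u) x) + a x * (∑ i, pd k (pd i (pd i u)) x)
      + ∑ i, (pd k (pd i a) x * pd i u x + pd i a x * pd k (pd i u) x) = 0 := by
    intro k
    have h := pd_congr hU heq k x hx
    have s1 : ContDiffOn ℝ (⊤ : ℕ∞) (fun y => ∑ i, pd i (pd i u) y) U :=
      ContDiffOn.sum (fun i _ => hu2 i i)
    have s2 : ContDiffOn ℝ (⊤ : ℕ∞) (fun y => ∑ i, pd i a y * pd i u y) U :=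
      ContDiffOn.sum (fun i _ => (ha1 i).mul (hu1 i))
    rw [pd_const, pd_add (smooth_diff hU (ha.mul s1) hx) (smooth_diff hU s2 hx),
      pd_mul (smooth_diff hU ha hx) (smooth_diff hU s1 hx),
      pd_sum (fun i => smooth_diff hU (hu2 i i) hx),
      pd_sum (fun i => smooth_diff hU ((ha1 i).mul (hu1 i)) hx)] at h
    rw [← h]
    congr 1
    exact Finset.sum_congr rfl fun i _ =>
      (pd_mul (smooth_diff hU (ha1 i) hx) (smooth_diff hU (hu1 i) hx) k).symm
  -- derivative of radiality
  have hrd : ∀ j k, (if j = k then pd k a x else 0) + x j * pd k (pd k a) x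
      - (pd j a x + x k * pd k (pd j a) x) = 0 := by
    intro j k
    have h := pd_congr hU (hrad j k) k x hx
    rw [pd_const, pd_sub (smooth_diff hU ((coord_smooth j).mul (ha1 k)) hx)
      (smooth_diff hU ((coord_smooth k).mul (ha1 j)) hx),
      pd_mul (smooth_diff hU (coord_smooth j) hx) (smooth_diff hU (ha1 k) hx),
      pd_mul (smooth_diff hU (coord_smooth k) hx) (smooth_diff hU (ha1 j) hx),
      pd_coord, pd_coord] at h
    simpa using h
  have hrs : ∀ j, ∑ k, x k * pd k (pd j a) x
      = x j * (∑ k, pd k (pd k a) x) - ((n : ℝ) - 1) * pd j a x := by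
    intro j
    have h := Finset.sum_eq_zero (s := Finset.univ) (fun k _ => hrd j k)
    simp only [Finset.sum_sub_distrib, Finset.sum_add_distrib, Finset.sum_ite_eq,
      Finset.mem_univ, if_true, Finset.sum_const, Finset.card_univ, Fintype.card_fin,
      nsmul_eq_mul, ← Finset.mul_sum] at h
    linarith
  have hEx : E x = ∑ k, x k * pd k u x := rfl
  -- scalar identities
  have f1 := heq x hx
  have f2 : (∑ k, x k * pd k a x) * (∑ i, pd i (pd i u) x)
      + a x * (∑ i, ∑ k, x k * pd k (pd i (pd i u)) x)
      + ∑ i, pd i u x * (∑ k, x k * pd k (pd i a) x)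
      + ∑ i, pd i a x * ∑ k, x k * pd i (pd k u) x = 0 := by
    have h := Finset.sum_eq_zero (s := Finset.univ)
      (fun k _ => (congrArg (fun t => x k * t) (hD k)).trans (mul_zero (x k)))
    rw [← h]
    rw [Finset.sum_comm (f := fun i k => x k * pd k (pd i (pd i u)) x)]
    simp only [Finset.mul_sum, Finset.sum_mul, mul_add, Finset.sum_add_distrib]
    rw [Finset.sum_comm (f := fun i k => pd i u x * (x k * pd k (pd i a) x)),
      Finset.sum_comm (f := fun i k => pd i a x * (x k * pd i (pd k u) x))]
    simp only [← add_assoc]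
    congr 1
    · congr 1
      · congr 1
        · rw [Finset.sum_comm]
          exact Finset.sum_congr rfl fun k _ => Finset.sum_congr rfl fun i _ => by ring
        · exact Finset.sum_congr rfl fun k _ => Finset.sum_congr rfl fun i _ => by ring
      · exact Finset.sum_congr rfl fun k _ => Finset.sum_congr rfl fun i _ => by ring
    · exact Finset.sum_congr rfl fun k _ => Finset.sum_congr rfl fun i _ => by
        rw [pd_comm hU hu i k x hx]; ring
  have f3 : (∑ k, x k * pd k a x) * (∑ i, pd i a x * pd i u x)
      = (∑ k, pd k a x * pd k a x) * E x := by
    rw [hEx, Finset.sum_mul_sum, Finset.sum_mul_sum]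
    refine Finset.sum_congr rfl fun k _ => Finset.sum_congr rfl fun i _ => ?_
    linear_combination pd k a x * pd i u x * hrad k i x hx
  have f4 : ∑ i, pd i u x * (∑ k, x k * pd k (pd i a) x)
      = E x * (∑ k, pd k (pd k a) x) - ((n : ℝ) - 1) * ∑ i, pd i a x * pd i u x := by
    simp only [hrs]
    rw [hEx, Finset.sum_mul, Finset.mul_sum, ← Finset.sum_sub_distrib]
    exact Finset.sum_congr rfl fun i _ => by ring
  have g1 : ∑ i, pd i a x * pd i E x = ∑ i, pd i a x * pd i u x
      + ∑ i, pd i a x * ∑ k, x k * pd i (pd k u) x := by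
    rw [← Finset.sum_add_distrib]
    exact Finset.sum_congr rfl fun i _ => by rw [hE1 i x hx]; ring
  have g2 : ∑ i, pd i (pd i R) x = (∑ k, pd k (pd k a) x) * E x
      + 2 * (∑ i, pd i a x * pd i E x)
      + a x * (2 * (∑ i, pd i (pd i u) x) + ∑ i, ∑ k, x k * pd k (pd i (pd i u)) x) := by
    simp only [hR2, hE2, Finset.sum_add_distrib, ← Finset.mul_sum, ← Finset.sum_mul]
  have g3 : ∑ i, pd i a x * pd i R x = (∑ k, pd k a x * pd k a x) * E x
      + a x * ∑ i, pd i a x * pd i E x := by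
    rw [Finset.sum_mul, Finset.mul_sum, ← Finset.sum_add_distrib]
    exact Finset.sum_congr rfl fun i _ => by rw [hR1 i x hx]; ring
  rw [g2, g3, g1]
  clear_value E
  linear_combination (2 * a x - ∑ k, x k * pd k a x) * f1 + a x * f2 + f3 - a x * f4
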